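/- Consider the instance with k ≥ 4 agents relevant and goods: k−1 'large' goods each valued 3k−7 by agent 1, k−2 'medium' goods valued 3, and k−1 'small' goods valued 1 (additive valuation). Then the k-maximin share of agent 1 over all 3k−4 goods equals 3k−6. -/

import Mathlib

open Finset

/-- `k`-maximin share of additive valuation `v` restricted to `S`. -/
noncomputable def mu {α : Type*} [Fintype α] [DecidableEq α]
    (v : α → ℝ) (k : ℕ) (S : Finset α) : ℝ :=
  ⨆ P : α → Fin k, ⨅ j : Fin k, ∑ g ∈ S.filter (fun g => P g = j), v g

/-- In the instance with `k−1` large goods of value `3k−7`, `k−2` medium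
goods of value `3`, and `k−1` small goods of value `1` (for agent 1), the
`k`-maximin share of agent 1 over all `3k−4` goods equals `3k−6`. -/
theorem mu_of_large_medium_small (k : ℕ) (hk : 4 ≤ k)
    (v : Fin (k - 1) ⊕ (Fin (k - 2) ⊕ Fin (k - 1)) → ℝ)
    (hvL : ∀ x : Fin (k - 1), v (Sum.inl x) = 3 * (k : ℝ) - 7)
    (hvM : ∀ x : Fin (k - 2), v (Sum.inr (Sum.inl x)) = 3)
    (hvS : ∀ x : Fin (k - 1), v (Sum.inr (Sum.inr x)) = 1) :
    mu v k Finset.univ = 3 * (k : ℝ) - 6 := by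
  obtain ⟨m, rfl⟩ : ∃ m, k = m + 2 := ⟨k - 2, by omega⟩
  have e1 : m + 2 - 1 = m + 1 := rfl
  have tot : ∑ g, v g = ((m + 2 : ℕ) : ℝ) * (3 * ((m + 2 : ℕ) : ℝ) - 6) := by
    simp only [Fintype.sum_sum_type, hvL, hvM, hvS, Finset.sum_const, Finset.card_univ,
      Fintype.card_fin, nsmul_eq_mul, e1, Nat.add_sub_cancel]
    push_cast
    ring
  have ub : ∀ P : Fin (m + 2 - 1) ⊕ (Fin (m + 2 - 2) ⊕ Fin (m + 2 - 1)) → Fin (m + 2),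
      (⨅ j : Fin (m + 2), ∑ g ∈ Finset.univ.filter (fun g => P g = j), v g)
        ≤ 3 * ((m + 2 : ℕ) : ℝ) - 6 := by
    intro P
    by_contra hlt
    push Not at hlt
    have h1 : ∀ j : Fin (m + 2), 3 * ((m + 2 : ℕ) : ℝ) - 6 <
        ∑ g ∈ Finset.univ.filter (fun g => P g = j), v g := fun j =>
      lt_of_lt_of_le hlt (ciInf_le (Set.finite_range _).bddBelow j)
    have h2 : ∑ j : Fin (m + 2), (3 * ((m + 2 : ℕ) : ℝ) - 6) <
        ∑ j : Fin (m + 2), ∑ g ∈ Finset.univ.filter (fun g => P g = j), v g :=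
      Finset.sum_lt_sum_of_nonempty Finset.univ_nonempty (fun j _ => h1 j)
    rw [Finset.sum_fiberwise, tot] at h2
    simp at h2
    linarith
  unfold mu
  apply le_antisymm
  · exact ciSup_le ub
  · let P : Fin (m + 2 - 1) ⊕ (Fin (m + 2 - 2) ⊕ Fin (m + 2 - 1)) → Fin (m + 2) :=
      Sum.elim (fun i => Fin.castSucc (n := m + 1) i)
        (Sum.elim (fun _ => Fin.last (m + 1)) (fun i => Fin.castSucc (n := m + 1) i))
    refine le_trans ?_ (le_ciSup (f := fun P : Fin (m + 2 - 1) ⊕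
      (Fin (m + 2 - 2) ⊕ Fin (m + 2 - 1)) → Fin (m + 2) =>
      ⨅ j : Fin (m + 2), ∑ g ∈ Finset.univ.filter (fun g => P g = j), v g)
      (Set.finite_range _).bddAbove P)
    refine le_ciInf fun j => ?_
    rw [Finset.sum_filter]
    simp only [Fintype.sum_sum_type, hvL, hvM, hvS, P, Sum.elim_inl, Sum.elim_inr]
    change _ ≤ (∑ x : Fin (m + 1), _) + ((∑ x : Fin m, _) + ∑ x : Fin (m + 1), _)
    refine Fin.lastCases ?_ (fun i => ?_) j
    · have hne : ∀ x : Fin (m + 1), x.castSucc ≠ Fin.last (m + 1) :=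
        fun x => (Fin.castSucc_lt_last x).ne
      simp only [hne, if_false, if_true, Finset.sum_const, Finset.card_univ, Fintype.card_fin,
        nsmul_eq_mul]
      push_cast
      linarith
    · have hne : Fin.last (m + 1) ≠ i.castSucc := (Fin.castSucc_lt_last i).ne'
      simp only [hne, if_false, Fin.castSucc_inj, Finset.sum_ite_eq', Finset.mem_univ, if_true,
        Finset.sum_const_zero]
      push_cast
      linarith
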